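/- arXiv:1212.3635 — 2 statements merged into one kernel-verified Lean document; each statement's English description precedes it below -/
import Mathlib

section
/- Let l be a prime, g ≥ 1 an integer, and G a subgroup of GSp_{2g}(𝔽_l). If the restriction to G of the quotient homomorphism GSp_{2g}(𝔽_l) → GSp_{2g}(𝔽_l)/{±I} is surjective (equivalently, if for every M ∈ GSp_{2g}(𝔽_l) at least one of M, −M lies in G), then G = GSp_{2g}(𝔽_l). -/
/-! The matrix `J` is itself symplectic and satisfies `J² = -I`. Hence `G` contains `J` or `-J`,
and in either case it contains the common square `-I`. An element of `GSp` that lies in `G` up to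
sign therefore lies in `G`. -/

open Matrix

/-- The standard symplectic form matrix `J = ((0, I_g), (-I_g, 0))`. -/
def Jmat (R : Type*) [Ring R] (g : ℕ) :
    Matrix (Fin g ⊕ Fin g) (Fin g ⊕ Fin g) R :=
  Matrix.fromBlocks 0 1 (-1) 0

theorem Jmat_mul_Jmat (R : Type*) [Ring R] (g : ℕ) : Jmat R g * Jmat R g = -1 := by
  rw [Jmat, Matrix.fromBlocks_multiply, ← Matrix.fromBlocks_one, Matrix.fromBlocks_neg]
  simp

theorem Jmat_transpose (R : Type*) [Ring R] (g : ℕ) : (Jmat R g)ᵀ = -Jmat R g := by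
  rw [Jmat, Matrix.fromBlocks_transpose, Matrix.fromBlocks_neg]
  simp

/-- If a subgroup `G` of `GSp_{2g}(𝔽_l)` surjects onto `GSp_{2g}(𝔽_l)/{±1}`,
then `G = GSp_{2g}(𝔽_l)`. Here `GSp` membership of an invertible matrix `M` is expressed
by the existence of `μ ∈ 𝔽_lˣ` with `Mᵀ J M = μ • J`, membership in `G` up to sign encodes
surjectivity onto the quotient, and the conclusion says every element of `GSp` lies in `G`. -/
theorem stmt_0 (l : ℕ) (hl : l.Prime) (g : ℕ) (hg : 1 ≤ g)
    (G : Subgroup (Matrix (Fin g ⊕ Fin g) (Fin g ⊕ Fin g) (ZMod l))ˣ)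
    (hGsub : ∀ M : (Matrix (Fin g ⊕ Fin g) (Fin g ⊕ Fin g) (ZMod l))ˣ, M ∈ G →
      ∃ μ : (ZMod l)ˣ,
        (M : Matrix (Fin g ⊕ Fin g) (Fin g ⊕ Fin g) (ZMod l))ᵀ * Jmat (ZMod l) g *
          (M : Matrix (Fin g ⊕ Fin g) (Fin g ⊕ Fin g) (ZMod l))
          = (μ : ZMod l) • Jmat (ZMod l) g)
    (hsurj : ∀ M : (Matrix (Fin g ⊕ Fin g) (Fin g ⊕ Fin g) (ZMod l))ˣ,
      (∃ μ : (ZMod l)ˣ,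
        (M : Matrix (Fin g ⊕ Fin g) (Fin g ⊕ Fin g) (ZMod l))ᵀ * Jmat (ZMod l) g *
          (M : Matrix (Fin g ⊕ Fin g) (Fin g ⊕ Fin g) (ZMod l))
          = (μ : ZMod l) • Jmat (ZMod l) g) → (M ∈ G ∨ -M ∈ G)) :
    ∀ M : (Matrix (Fin g ⊕ Fin g) (Fin g ⊕ Fin g) (ZMod l))ˣ,
      (∃ μ : (ZMod l)ˣ,
        (M : Matrix (Fin g ⊕ Fin g) (Fin g ⊕ Fin g) (ZMod l))ᵀ * Jmat (ZMod l) g *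
          (M : Matrix (Fin g ⊕ Fin g) (Fin g ⊕ Fin g) (ZMod l))
          = (μ : ZMod l) • Jmat (ZMod l) g) → M ∈ G := by
  intro M hM
  let J : (Matrix (Fin g ⊕ Fin g) (Fin g ⊕ Fin g) (ZMod l))ˣ :=
    ⟨Jmat (ZMod l) g, -Jmat (ZMod l) g,
      by rw [mul_neg, Jmat_mul_Jmat, neg_neg], by rw [neg_mul, Jmat_mul_Jmat, neg_neg]⟩
  have hJJ : J * J = -1 := Units.ext (Jmat_mul_Jmat (ZMod l) g)
  have hJ : J ∈ G ∨ -J ∈ G := by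
    refine hsurj J ⟨1, ?_⟩
    change (Jmat (ZMod l) g)ᵀ * Jmat (ZMod l) g * Jmat (ZMod l) g = _
    rw [Jmat_transpose, neg_mul, Jmat_mul_Jmat, neg_neg, one_mul, Units.val_one, one_smul]
  have hneg : (-1 : (Matrix (Fin g ⊕ Fin g) (Fin g ⊕ Fin g) (ZMod l))ˣ) ∈ G := by
    rcases hJ with h | h
    · exact hJJ ▸ G.mul_mem h h
    · have h2 := G.mul_mem h h
      rwa [neg_mul_neg, hJJ] at h2
  rcases hsurj M hM with h | h
  · exact h
  · have h2 := G.mul_mem hneg h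
    rwa [neg_mul_neg, one_mul] at h2
end

section
/- Let K be a number field of degree d with ring of integers O_K, let Λ be a finitely generated torsion-free O_K-module of rank r + 1, and let ‖·‖ be a norm on Λ_ℝ = ℝ ⊗_ℤ Λ. Then there is a constant C > 0, depending only on K, Λ, and ‖·‖, with the following property: for all real numbers x ≥ 1 and Q ≥ 1, every family (ω_𝔭)_{𝔭} of real numbers ω_𝔭 ∈ [0, 1) indexed by the nonzero prime ideals 𝔭 of O_K, and every subset E ⊆ Λ such that (i) ‖e‖ ≤ x for every e ∈ E, and (ii) for every nonzero prime ideal 𝔭 with N(𝔭) ≤ Q the image of E satisfies #π_𝔭(E) ≤ (1 − ω_𝔭)·#(Λ/𝔭Λ), one has #E ≤ C · max(x^{(r+1)d}, Q^{2(r+1)}) / L(Q), where L(Q) = Σ_𝔞 ∏_{𝔭 ∣ 𝔞} ω_𝔭/(1 − ω_𝔭), the sum running over all squarefree nonzero ideals 𝔞 of O_K with N(𝔞) ≤ Q. -/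
open NumberField TensorProduct

/-!
A dual form of the large sieve. For each prime `𝔭` let `g_𝔭` be the function on `Λ / 𝔭Λ` equal to
`w / (1 - w)` on the image of `E` and to `-1` off it, where `w ≥ ω_𝔭` is the proportion of omitted
residues. It has mean zero and mean square `w / (1 - w)`. By the Chinese remainder theorem the
products `g_𝔞 = ∏_{𝔭 ∣ 𝔞} g_𝔭` for squarefree `𝔞` are orthogonal (`sum_prod_mul_prod`), so
`F = ∑_{N𝔞 ≤ Q} g_𝔞` has mean square `W = ∑_𝔞 ∏_{𝔭 ∣ 𝔞} w / (1 - w) ≥ L(Q)`, while `F = W` on `E`.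

To bound `∑_E F²` by the mean of `F²`, work on the finite group `G = Λ / MΛ` and multiply `F` by
`ψ = ∑_{χ ∈ B} χ`, with `B` a box of characters of small frequency. Two properties of `B` matter.

* On the ball of radius `x` all phases are small, so `|ψ| ≥ #B / 2` (`half_card_le_norm_sum`).
* For `χ ≠ χ'` in `B`, the quotient `χ / χ'` is nontrivial on `𝔞𝔟Λ` whenever `N𝔞, N𝔟 ≤ Q`. Indeed
  the pigeonhole principle gives `0 ≠ α ∈ 𝔞𝔟` with coordinates `O(Q^{2/d})`, and the phase of
  `χ / χ'` is nonzero and less than one full turn at some `α • b_j` (`exists_not_dvd`). As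
  `g_𝔞 g_𝔟` is invariant under `𝔞𝔟Λ`, all cross terms in the mean of `|F ψ|²` vanish, and this mean
  equals `#B` times the mean of `F²`.

Hence `#E · W² · (#B / 2)² ≤ #G · #B · W` (`card_mul_le`). The box can be chosen with
`#G / #B = T ^ m`, where `T` is comparable to `max(x, Q^{2/d})` and `m = (r + 1) d`; only
`m ≤ (r + 1) d` is needed.
-/

/-- If `h` is invariant under translations surjecting onto `X`, then `k ∘ ρ` and `h` are
independent: the mean of the product is the product of the means. -/
lemma sum_mul_of_invariant {G X : Type*} [AddCommGroup G] [Fintype G] [AddCommGroup X] [Fintype X]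
    (ρ : G →+ X) (k : X → ℝ) (h : G → ℝ)
    (hinv : ∀ x : X, ∃ t, (∀ v, h (v + t) = h v) ∧ ρ t = x) :
    ∑ v, k (ρ v) * h v = (∑ x, k x) / Fintype.card X * ∑ v, h v := by
  have key : ∀ x : X, ∑ v, k (ρ v) * h v = ∑ v, k (ρ v + x) * h v := by
    intro x
    obtain ⟨t, ht, rfl⟩ := hinv x
    rw [← Equiv.sum_comp (Equiv.addRight t)]
    simp [ht]
  have hX : (Fintype.card X : ℝ) ≠ 0 := by
    have : 0 < Fintype.card X := Fintype.card_pos_iff.mpr ⟨0⟩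
    positivity
  have h1 : (Fintype.card X : ℝ) * ∑ v, k (ρ v) * h v = (∑ x, k x) * ∑ v, h v := by
    calc (Fintype.card X : ℝ) * ∑ v, k (ρ v) * h v
        = ∑ x : X, ∑ v, k (ρ v + x) * h v := by
          rw [← Finset.sum_congr rfl (fun x _ => key x)]; simp
      _ = ∑ v, ∑ x : X, k (ρ v + x) * h v := Finset.sum_comm
      _ = ∑ v, (∑ x, k x) * h v := by
          refine Finset.sum_congr rfl fun v _ => ?_
          rw [← Finset.sum_mul]
          congr 1
          exact Equiv.sum_comp (Equiv.addLeft (ρ v)) k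
      _ = _ := by rw [Finset.mul_sum]
  field_simp
  linarith

/-! ### Mean-zero sieve functions and their orthogonality -/

lemma sum_ite_mem_const {Y : Type*} [Fintype Y] [DecidableEq Y] (H : Finset Y) (a b : ℝ) :
    ∑ x, (if x ∈ H then a else b) = H.card * a + (Fintype.card Y - H.card) * b := by
  rw [Finset.sum_ite]
  have h2 : (Finset.univ.filter (fun x => x ∉ H)) = Hᶜ := by ext; simp
  have h3 : H.card ≤ Fintype.card Y := Finset.card_le_univ _
  simp [h2, Finset.card_compl, Nat.cast_sub h3]

section
variable {ι : Type*} {X : ι → Type*} [∀ p, Fintype (X p)] [∀ p, DecidableEq (X p)]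

/-- The exact sieve weight `w / (1 - w)` attached to a residue set `H p ⊆ X p`, where
`w = 1 - #(H p) / #(X p)` is the proportion of omitted residues. -/
noncomputable def sieveWeight (H : ∀ p, Finset (X p)) (p : ι) : ℝ :=
  (Fintype.card (X p) - (H p).card) / (H p).card

/-- The function on residues that equals the sieve weight on `H p` and `-1` on its complement; the
normalization makes it mean-zero, with mean square equal to the sieve weight. -/
noncomputable def sieveFun (H : ∀ p, Finset (X p)) (p : ι) (x : X p) : ℝ :=
  if x ∈ H p then sieveWeight H p else -1

lemma sieveWeight_nonneg (H : ∀ p, Finset (X p)) (p : ι) : 0 ≤ sieveWeight H p := by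
  unfold sieveWeight
  have : ((H p).card : ℝ) ≤ Fintype.card (X p) := by exact_mod_cast Finset.card_le_univ _
  exact div_nonneg (by linarith) (by positivity)

lemma sum_sieveFun (H : ∀ p, Finset (X p)) (p : ι) (hH : (H p).Nonempty) :
    ∑ x, sieveFun H p x = 0 := by
  have : ((H p).card : ℝ) ≠ 0 := by exact_mod_cast hH.card_pos.ne'
  simp only [sieveFun]
  rw [sum_ite_mem_const, sieveWeight]
  field_simp
  ring

lemma sum_sieveFun_sq (H : ∀ p, Finset (X p)) (p : ι) [Nonempty (X p)]
    (hH : (H p).Nonempty) :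
    (∑ x, sieveFun H p x ^ 2) / Fintype.card (X p) = sieveWeight H p := by
  have h0 : ((H p).card : ℝ) ≠ 0 := by exact_mod_cast hH.card_pos.ne'
  have h1 : (Fintype.card (X p) : ℝ) ≠ 0 := by
    have : 0 < Fintype.card (X p) := Fintype.card_pos
    positivity
  simp only [sieveFun, ite_pow]
  rw [sum_ite_mem_const, sieveWeight]
  field_simp
  ring

end

section
variable {G ι J U : Type*} [AddCommGroup G] [Fintype G] [DecidableEq ι] {X : ι → Type*}
  [∀ p, AddCommGroup (X p)] [∀ p, Fintype (X p)]

/-- Chinese remainder theorem in averaged form: functions of the residues at distinct places are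
independent. -/
lemma sum_prod_eq (ρ : ∀ p, G →+ X p)
    (hind : ∀ (S : Finset ι) (p : ι), p ∉ S → ∀ x : X p,
      ∃ t, (∀ q ∈ S, ρ q t = 0) ∧ ρ p t = x)
    (S : Finset ι) (k : ∀ p, X p → ℝ) :
    ∑ v, ∏ p ∈ S, k p (ρ p v) =
      Fintype.card G * ∏ p ∈ S, ((∑ x, k p x) / Fintype.card (X p)) := by
  induction S using Finset.induction_on with
  | empty => simp
  | insert p S hp ih =>
    simp only [Finset.prod_insert hp]
    rw [sum_mul_of_invariant (ρ p) (k p) (fun v => ∏ p ∈ S, k p (ρ p v)), ih]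
    · ring
    · intro x
      obtain ⟨t, ht, htx⟩ := hind S p hp x
      refine ⟨t, fun v => Finset.prod_congr rfl fun q hq => ?_, htx⟩
      simp [ht q hq]

/-- A function invariant under `t` is orthogonal to every character nontrivial at `t`. -/
lemma sum_char_eq_zero (f : G → ℂ) (φ : AddChar G ℂ) (t : G) (hf : ∀ v, f (v + t) = f v)
    (ht : φ t ≠ 1) : ∑ v, f v * φ v = 0 := by
  have h : ∑ v, f v * φ v = (∑ v, f v * φ v) * φ t := by
    conv_lhs => rw [← Equiv.sum_comp (Equiv.addRight t)]
    simp [hf, AddChar.map_add_eq_mul, Finset.sum_mul, mul_assoc]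
  have h2 : (∑ v, f v * φ v) * (φ t - 1) = 0 := by rw [mul_sub, ← h]; ring
  exact (mul_eq_zero.mp h2).resolve_right (sub_ne_zero.mpr ht)

variable [∀ p, DecidableEq (X p)]

/-- The products of sieve functions attached to distinct finite sets of places are orthogonal. -/
lemma sum_prod_mul_prod (ρ : ∀ p, G →+ X p)
    (hind : ∀ (S : Finset ι) (p : ι), p ∉ S → ∀ x : X p,
      ∃ t, (∀ q ∈ S, ρ q t = 0) ∧ ρ p t = x)
    (H : ∀ p, Finset (X p)) (hH : ∀ p, (H p).Nonempty) (S S' : Finset ι) :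
    ∑ v, (∏ p ∈ S, sieveFun H p (ρ p v)) * (∏ p ∈ S', sieveFun H p (ρ p v)) =
      if S = S' then Fintype.card G * ∏ p ∈ S, sieveWeight H p else 0 := by
  have h1 : ∀ v, (∏ p ∈ S, sieveFun H p (ρ p v)) * (∏ p ∈ S', sieveFun H p (ρ p v)) =
      ∏ p ∈ S ∪ S', (fun x => (if p ∈ S then sieveFun H p x else 1) *
        (if p ∈ S' then sieveFun H p x else 1)) (ρ p v) := by
    intro v
    simp only
    rw [Finset.prod_mul_distrib]
    congr 1
    · rw [Finset.prod_ite_mem, Finset.inter_eq_right.mpr Finset.subset_union_left]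
    · rw [Finset.prod_ite_mem, Finset.inter_eq_right.mpr Finset.subset_union_right]
  simp only [h1]
  rw [sum_prod_eq ρ hind (S ∪ S') (fun p x => (if p ∈ S then sieveFun H p x else 1) *
        (if p ∈ S' then sieveFun H p x else 1))]
  split_ifs with h
  · subst h
    congr 1
    rw [Finset.union_self]
    refine Finset.prod_congr rfl fun p hp => ?_
    rw [← sum_sieveFun_sq H p (hH p)]
    simp [hp, sq]
  · have : ∃ p ∈ S ∪ S', ¬ (p ∈ S ∧ p ∈ S') := by
      by_contra! hc
      apply h
      ext p
      constructor
      · intro hp; exact (hc p (Finset.mem_union_left _ hp)).2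
      · intro hp; exact (hc p (Finset.mem_union_right _ hp)).1
    obtain ⟨p, hp, hp'⟩ := this
    rw [Finset.prod_eq_zero hp, mul_zero]
    rw [Finset.mem_union] at hp
    have h0 := sum_sieveFun H p (hH p)
    rcases hp with hp | hp
    · have : p ∉ S' := fun h => hp' ⟨hp, h⟩
      simp [hp, this, h0]
    · have : p ∉ S := fun h => hp' ⟨h, hp⟩
      simp [hp, this, h0]

/-! ### The large sieve on a finite abelian group -/

/-- The large sieve on a finite abelian group `G`, with places `ρ p : G →+ X p`. The sets `A j` of
places are the sieve moduli. The characters `χ u` are separated in the sense that any two of them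
differ on the common kernel of the places in any two moduli, and they are biased on `E`: there
their sum has at least half its trivial size. -/
theorem card_mul_le (ρ : ∀ p, G →+ X p) [Fintype J] [Fintype U]
    (hind : ∀ (S : Finset ι) (p : ι), p ∉ S → ∀ x : X p,
      ∃ t, (∀ q ∈ S, ρ q t = 0) ∧ ρ p t = x)
    (A : J → Finset ι) (hA : Function.Injective A) (χ : U → AddChar G ℂ)
    (hχ : ∀ i j u u', u ≠ u' → ∃ t, (∀ q ∈ A i ∪ A j, ρ q t = 0) ∧ χ u t ≠ χ u' t)
    (E : Finset G) (hE : ∀ v ∈ E, (Fintype.card U : ℝ) / 2 ≤ ‖∑ u, χ u v‖)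
    (ω : ι → ℝ) (hω : ∀ p, 0 ≤ ω p ∧ ω p < 1)
    (hcard : ∀ p, ((E.image (ρ p)).card : ℝ) ≤ (1 - ω p) * Fintype.card (X p)) :
    (E.card : ℝ) * Fintype.card U * ∑ j, ∏ p ∈ A j, ω p / (1 - ω p) ≤ 4 * Fintype.card G := by
  classical
  rcases E.eq_empty_or_nonempty with rfl | hEne
  · simp
  set H : ∀ p, Finset (X p) := fun p => E.image (ρ p) with hHdef
  have hH : ∀ p, (H p).Nonempty := fun p => hEne.image _
  set W := ∑ j, ∏ p ∈ A j, sieveWeight H p with hW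
  have hW0 : 0 ≤ W := Finset.sum_nonneg fun j _ => Finset.prod_nonneg fun p _ =>
    sieveWeight_nonneg H p
  have hle : ∑ j, ∏ p ∈ A j, ω p / (1 - ω p) ≤ W := by
    refine Finset.sum_le_sum fun j _ => Finset.prod_le_prod (fun p _ => ?_) fun p _ => ?_
    · have := hω p
      exact div_nonneg this.1 (by linarith)
    · have h1 := hω p
      have h2 : (0 : ℝ) < (H p).card := by exact_mod_cast (hH p).card_pos
      have h3 := hcard p
      rw [sieveWeight, div_le_div_iff₀ (by linarith) h2]
      change ((H p).card : ℝ) ≤ _ at h3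
      nlinarith
  -- `F` is the constant `W` on `E`, and has mean square `W` over all of `G`.
  set f : J → G → ℝ := fun j v => ∏ p ∈ A j, sieveFun H p (ρ p v) with hf
  set F : G → ℝ := fun v => ∑ j, f j v with hF
  have hFE : ∀ v ∈ E, F v = W := by
    intro v hv
    refine Finset.sum_congr rfl fun j _ => Finset.prod_congr rfl fun p _ => ?_
    have : ρ p v ∈ H p := Finset.mem_image_of_mem _ hv
    simp [sieveFun, this]
  have hFsq : ∑ v, F v ^ 2 = Fintype.card G * W := by
    calc ∑ v, F v ^ 2 = ∑ v, ∑ i, ∑ j, f i v * f j v := by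
          refine Finset.sum_congr rfl fun v _ => ?_
          rw [sq, hF, Finset.sum_mul_sum]
      _ = ∑ i, ∑ j, ∑ v, f i v * f j v := by
          rw [Finset.sum_comm]
          exact Finset.sum_congr rfl fun i _ => Finset.sum_comm
      _ = ∑ i, ∑ j, if i = j then Fintype.card G * ∏ p ∈ A i, sieveWeight H p else 0 := by
          refine Finset.sum_congr rfl fun i _ => Finset.sum_congr rfl fun j _ => ?_
          rw [hf, sum_prod_mul_prod ρ hind H hH]
          simp [hA.eq_iff]
      _ = _ := by simp [hW, Finset.mul_sum]
  -- `F ^ 2` is a sum of products of two terms, each invariant under a common kernel on which the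
  -- two characters differ.
  have hoff : ∀ u u', u ≠ u' → ∑ v, ((F v : ℂ) ^ 2) * (χ u * (χ u')⁻¹) v = 0 := by
    intro u u' huu
    have : ∀ v, ((F v : ℂ) ^ 2) * (χ u * (χ u')⁻¹) v =
        ∑ i, ∑ j, ((f i v * f j v : ℝ) : ℂ) * (χ u * (χ u')⁻¹) v := by
      intro v
      simp only [← Finset.sum_mul]
      congr 1
      rw [sq, hF]
      push_cast
      rw [Finset.sum_mul_sum]
    simp only [this]
    rw [Finset.sum_comm]
    refine Finset.sum_eq_zero fun i _ => ?_
    rw [Finset.sum_comm]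
    refine Finset.sum_eq_zero fun j _ => ?_
    obtain ⟨t, ht, hne⟩ := hχ i j u u' huu
    refine sum_char_eq_zero (fun v => ((f i v * f j v : ℝ) : ℂ)) _ t (fun v => ?_) ?_
    · have h1 : ∀ i' : J, A i' ⊆ A i ∪ A j → f i' (v + t) = f i' v := by
        intro i' hi'
        refine Finset.prod_congr rfl fun p hp => ?_
        simp [ht p (hi' hp)]
      simp only [h1 i Finset.subset_union_left, h1 j Finset.subset_union_right]
    · intro h
      apply hne
      rw [AddChar.mul_apply, AddChar.inv_apply', mul_inv_eq_one₀] at h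
      · exact h
      · exact norm_ne_zero_iff.mp (by simp)
  have htot : ∑ v, (F v) ^ 2 * ‖∑ u, χ u v‖ ^ 2 = Fintype.card U * (Fintype.card G * W) := by
    have : ((∑ v, (F v) ^ 2 * ‖∑ u, χ u v‖ ^ 2 : ℝ) : ℂ) =
        ((Fintype.card U * (Fintype.card G * W) : ℝ) : ℂ) := by
      calc ((∑ v, (F v) ^ 2 * ‖∑ u, χ u v‖ ^ 2 : ℝ) : ℂ)
          = ∑ v, ∑ u, ∑ u', (F v : ℂ) ^ 2 * (χ u * (χ u')⁻¹) v := by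
            push_cast
            refine Finset.sum_congr rfl fun v _ => ?_
            simp only [← Finset.mul_sum]
            congr 1
            rw [← Complex.mul_conj', map_sum, Finset.sum_mul_sum]
            simp [AddChar.map_neg_eq_conj]
        _ = ∑ u, ∑ u', ∑ v, (F v : ℂ) ^ 2 * (χ u * (χ u')⁻¹) v := by
            rw [Finset.sum_comm]
            exact Finset.sum_congr rfl fun i _ => Finset.sum_comm
        _ = ∑ u : U, ∑ u' : U, if u = u' then ((∑ v, F v ^ 2 : ℝ) : ℂ) else 0 := by
            refine Finset.sum_congr rfl fun u _ => Finset.sum_congr rfl fun u' _ => ?_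
            split_ifs with h
            · subst h; simp
            · exact hoff u u' h
        _ = _ := by rw [hFsq]; simp
    exact_mod_cast this
  have hlow : (E.card : ℝ) * (W ^ 2 * ((Fintype.card U : ℝ) / 2) ^ 2) ≤
      Fintype.card U * (Fintype.card G * W) := by
    rw [← htot]
    calc (E.card : ℝ) * (W ^ 2 * ((Fintype.card U : ℝ) / 2) ^ 2)
        = ∑ v ∈ E, W ^ 2 * ((Fintype.card U : ℝ) / 2) ^ 2 := by simp
      _ ≤ ∑ v ∈ E, (F v) ^ 2 * ‖∑ u, χ u v‖ ^ 2 := by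
          refine Finset.sum_le_sum fun v hv => ?_
          rw [hFE v hv]
          have := hE v hv
          gcongr
      _ ≤ _ := Finset.sum_le_sum_of_subset_of_nonneg (Finset.subset_univ _)
          fun v _ _ => by positivity
  calc (E.card : ℝ) * Fintype.card U * ∑ j, ∏ p ∈ A j, ω p / (1 - ω p)
      ≤ (E.card : ℝ) * Fintype.card U * W := by gcongr
    _ ≤ 4 * Fintype.card G := by
      rcases (mul_nonneg (Nat.cast_nonneg (α := ℝ) (Fintype.card U)) hW0).eq_or_lt with h | h
      · rw [mul_assoc, ← h]; simp
      · refine le_of_mul_le_mul_right ?_ h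
        nlinarith
end

/-! ### Geometry of the lattice -/

/-- A definite seminorm on a finite-dimensional real space bounds every linear functional. -/
lemma exists_le_seminorm {V : Type*} [AddCommGroup V] [Module ℝ V] [FiniteDimensional ℝ V]
    (p : Seminorm ℝ V) (hp : ∀ v, p v = 0 → v = 0) (f : V →ₗ[ℝ] ℝ) :
    ∃ C : ℝ, 0 ≤ C ∧ ∀ v, |f v| ≤ C * p v := by
  let : Norm V := ⟨p⟩
  have core : NormedSpace.Core ℝ V :=
    { norm_nonneg := fun v => apply_nonneg p v
      norm_smul := fun c v => map_smul_eq_mul p c v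
      norm_triangle := fun v w => map_add_le_add p v w
      norm_eq_zero_iff := fun v => ⟨hp v, fun h => by subst h; exact map_zero p⟩ }
  let : NormedAddCommGroup V := NormedAddCommGroup.ofCore core
  let : NormedSpace ℝ V := NormedSpace.ofCore core
  exact ⟨‖LinearMap.toContinuousLinearMap f‖, norm_nonneg _,
    fun v => (LinearMap.toContinuousLinearMap f).le_opNorm v⟩

lemma exists_repr_le {Λ : Type*} [AddCommGroup Λ] {m : ℕ} (b : Module.Basis (Fin m) ℤ Λ)
    (nrm : Seminorm ℝ (ℝ ⊗[ℤ] Λ)) (hnrm : ∀ v, nrm v = 0 → v = 0) :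
    ∃ κ : ℝ, 0 ≤ κ ∧ ∀ (v : Λ) (i : Fin m), |(b.repr v i : ℝ)| ≤ κ * nrm ((1 : ℝ) ⊗ₜ[ℤ] v) := by
  let b' := b.baseChange ℝ
  have : FiniteDimensional ℝ (ℝ ⊗[ℤ] Λ) := b'.finiteDimensional_of_finite
  choose C hC0 hC using fun i : Fin m => exists_le_seminorm nrm hnrm (b'.coord i)
  refine ⟨∑ i, C i, Finset.sum_nonneg fun i _ => hC0 i, fun v i => ?_⟩
  have h := hC i ((1 : ℝ) ⊗ₜ[ℤ] v)
  have h2 : b'.coord i ((1 : ℝ) ⊗ₜ[ℤ] v) = b.repr v i := by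
    simp [b', Module.Basis.baseChange_repr_tmul]
  rw [h2] at h
  refine h.trans (mul_le_mul_of_nonneg_right ?_ (apply_nonneg _ _))
  exact Finset.single_le_sum (fun j _ => hC0 j) (Finset.mem_univ i)

/-- Since `Λ` embeds into `K ⊗ Λ`, its `ℤ`-rank is at most `dim_ℚ (K ⊗ Λ)`. -/
lemma finrank_int_le (K : Type*) [Field K] [NumberField K] (Λ : Type*) [AddCommGroup Λ]
    [Module (𝓞 K) Λ] [Module.Finite (𝓞 K) Λ] [NoZeroSMulDivisors (𝓞 K) Λ]
    {m : ℕ} (b : Module.Basis (Fin m) ℤ Λ) :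
    m ≤ Module.finrank K (K ⊗[𝓞 K] Λ) * Module.finrank ℚ K := by
  have : Module.IsTorsionFree (𝓞 K) Λ := inferInstance
  have hinj : Function.Injective (TensorProduct.mk (𝓞 K) K Λ 1) := by
    rw [injective_iff_map_eq_zero]
    intro v hv
    obtain ⟨c, hc⟩ := (IsLocalizedModule.eq_zero_iff (nonZeroDivisors (𝓞 K))
      (TensorProduct.mk (𝓞 K) K Λ 1)).mp hv
    rw [Submonoid.smul_def] at hc
    exact (smul_eq_zero.mp hc).resolve_left (nonZeroDivisors.coe_ne_zero c)
  let f : Λ →ₗ[ℤ] K ⊗[𝓞 K] Λ := (TensorProduct.mk (𝓞 K) K Λ 1).toAddMonoidHom.toIntLinearMap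
  have hli : LinearIndependent ℤ (f ∘ b) :=
    b.linearIndependent.map' f (LinearMap.ker_eq_bot.mpr hinj)
  rw [LinearIndependent.iff_fractionRing ℤ ℚ] at hli
  have : Module.Finite ℚ (K ⊗[𝓞 K] Λ) := Module.Finite.trans K _
  have := hli.fintype_card_le_finrank
  rw [Fintype.card_fin, ← Module.finrank_mul_finrank ℚ K] at this
  rwa [mul_comm]

/-- Pigeonhole form of Minkowski's theorem: an ideal whose norm is smaller than `(A + 1) ^ d` has a
nonzero element with coordinates at most `A`. -/
lemma exists_small_mem (K : Type*) [Field K] [NumberField K] {κ : Type*} [Fintype κ]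
    (β : Module.Basis κ ℤ (𝓞 K)) (I : Ideal (𝓞 K)) (hI : I ≠ ⊥) (A : ℕ)
    (hA : Ideal.absNorm I < (A + 1) ^ Fintype.card κ) :
    ∃ α ∈ I, α ≠ 0 ∧ ∀ k, |β.repr α k| ≤ A := by
  classical
  have : Finite (𝓞 K ⧸ I) := Ideal.finiteQuotientOfFreeOfNeBot I hI
  let := Fintype.ofFinite (𝓞 K ⧸ I)
  let g : (κ → Fin (A + 1)) → 𝓞 K := fun a => ∑ k, ((a k : ℕ) : ℤ) • β k
  have hcard : Fintype.card (𝓞 K ⧸ I) < Fintype.card (κ → Fin (A + 1)) := by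
    rw [← Nat.card_eq_fintype_card]
    simpa [Ideal.absNorm_apply, Submodule.cardQuot_apply] using hA
  obtain ⟨a, a', hne, heq⟩ := Fintype.exists_ne_map_eq_of_card_lt
    (fun a => Ideal.Quotient.mk I (g a)) hcard
  have hrepr : ∀ k, β.repr (g a - g a') k = (a k : ℤ) - (a' k : ℤ) := by
    intro k
    simp only [g, map_sub, map_sum, map_zsmul, Module.Basis.repr_self]
    simp [Finsupp.single_apply]
  refine ⟨g a - g a', Ideal.Quotient.eq.mp heq, fun h => hne ?_, fun k => ?_⟩
  · funext k
    have := hrepr k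
    rw [h] at this
    simp at this
    apply Fin.ext
    omega
  · rw [hrepr, abs_le]
    have := (a k).isLt
    have := (a' k).isLt
    constructor <;> omega

/-- A nonzero integral functional on `Λ` does not vanish on `α • Λ` for `α ≠ 0`, because `α • Λ`
contains a nonzero integer multiple of `Λ`. -/
lemma exists_functional_ne_zero {K : Type*} [Field K] [NumberField K] {Λ : Type*} [AddCommGroup Λ]
    [Module (𝓞 K) Λ] {m : ℕ} (b : Module.Basis (Fin m) ℤ Λ) (α : 𝓞 K) (hα : α ≠ 0)
    (t : Fin m → ℤ) (ht : t ≠ 0) : ∃ j, ∑ i, t i * b.repr (α • b j) i ≠ 0 := by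
  by_contra! hc
  let φ : Λ →ₗ[ℤ] ℤ := ∑ i, t i • b.coord i
  have hφ : ∀ v, φ v = ∑ i, t i * b.repr v i := by intro v; simp [φ]
  let mulα : Λ →ₗ[ℤ] Λ := (DistribSMul.toAddMonoidHom Λ α).toIntLinearMap
  have h0 : φ ∘ₗ mulα = 0 := by
    refine b.ext fun j => ?_
    simpa [hφ, mulα] using hc j
  have hN : ∃ N : ℤ, N ≠ 0 ∧ ∃ γ : 𝓞 K, (N : 𝓞 K) = α * γ := by
    refine ⟨Ideal.absNorm (Ideal.span {α}), ?_, ?_⟩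
    · simpa using hα
    · have := Ideal.absNorm_mem (Ideal.span {α})
      obtain ⟨γ, hγ⟩ := Ideal.mem_span_singleton.mp this
      exact ⟨γ, by simpa using hγ⟩
  obtain ⟨N, hN0, γ, hγ⟩ := hN
  apply ht
  funext i
  have h1 : φ (α • (γ • b i)) = 0 := by
    have := LinearMap.congr_fun h0 (γ • b i)
    simpa [mulα] using this
  rw [smul_smul, ← hγ, Int.cast_smul_eq_zsmul, map_zsmul, hφ] at h1
  simpa [Finsupp.single_apply, hN0] using h1

/-- A homomorphism out of `Λ` whose values are killed by `M` factors through the coordinates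
modulo `M`. -/
lemma exists_lift_hom {Λ X : Type*} [AddCommGroup Λ] [AddCommGroup X] {m : ℕ}
    (b : Module.Basis (Fin m) ℤ Λ) (M : ℕ) (f : Λ →+ X) (hf : ∀ v, (M : ℤ) • f v = 0) :
    ∃ ρ : (Fin m → ZMod M) →+ X, ∀ v, ρ (fun i => (b.repr v i : ZMod M)) = f v := by
  refine ⟨∑ i, (ZMod.lift M ⟨zmultiplesHom X (f (b i)), by simpa using hf (b i)⟩).comp
    (Pi.evalAddMonoidHom _ i), fun v => ?_⟩
  have h : f v = ∑ i, b.repr v i • f (b i) := by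
    conv_lhs => rw [← b.sum_repr v, map_sum]
    simp only [map_zsmul]
  rw [h]
  simp [AddMonoidHom.finsetSum_apply]

lemma absNorm_smul_quotient {K : Type*} [Field K] [NumberField K] {Λ : Type*} [AddCommGroup Λ]
    [Module (𝓞 K) Λ] (I : Ideal (𝓞 K)) (M : ℕ) (hM : Ideal.absNorm I ∣ M) (v : Λ) :
    (M : ℤ) • (Submodule.Quotient.mk v : Λ ⧸ (I • ⊤ : Submodule (𝓞 K) Λ)) = 0 := by
  rw [← Submodule.Quotient.mk_smul, Submodule.Quotient.mk_eq_zero,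
    ← Int.cast_smul_eq_zsmul (𝓞 K)]
  refine Submodule.smul_mem_smul ?_ trivial
  obtain ⟨k, rfl⟩ := hM
  push_cast
  exact Ideal.mul_mem_right _ _ (Ideal.absNorm_mem I)

lemma squarefree_ideal_ext {R : Type*} [CommRing R] [IsDedekindDomain R] {I J : Ideal R}
    (hI : Squarefree I) (hJ : Squarefree J) (h : ∀ p : Ideal R, p.IsPrime → (p ∣ I ↔ p ∣ J)) :
    I = J := by
  have hI0 := hI.ne_zero
  have hJ0 := hJ.ne_zero
  rw [← associated_iff_eq, UniqueFactorizationMonoid.associated_iff_normalizedFactors_eq_normalizedFactors hI0 hJ0]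
  rw [UniqueFactorizationMonoid.squarefree_iff_nodup_normalizedFactors hI0] at hI
  rw [UniqueFactorizationMonoid.squarefree_iff_nodup_normalizedFactors hJ0] at hJ
  refine (Multiset.Nodup.ext hI hJ).mpr fun p => ?_
  rw [Ideal.mem_normalizedFactors_iff hI0, Ideal.mem_normalizedFactors_iff hJ0,
    ← Ideal.dvd_iff_le, ← Ideal.dvd_iff_le]
  exact and_congr_right fun hp => h p hp

/-- If every phase `2 * π * j u / M` is at most `1` in absolute value, each summand has real part at
least `1 / 2`; the constant `7` exceeds `2 * π`. -/
lemma half_card_le_norm_sum {U : Type*} [Fintype U] (M : ℕ) [NeZero M] (j : U → ℤ)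
    (hj : ∀ u, 7 * |(j u : ℝ)| ≤ M) :
    (Fintype.card U : ℝ) / 2 ≤ ‖∑ u, ZMod.stdAddChar (N := M) (j u : ZMod M)‖ := by
  have hM : (0 : ℝ) < M := by exact_mod_cast Nat.pos_of_ne_zero (NeZero.ne M)
  refine le_trans ?_ (Complex.re_le_norm _)
  rw [Complex.re_sum]
  calc (Fintype.card U : ℝ) / 2 = ∑ u : U, (1 / 2 : ℝ) := by simp; ring
    _ ≤ _ := by
      refine Finset.sum_le_sum fun u _ => ?_
      rw [ZMod.stdAddChar_coe]
      have h1 : 2 * (Real.pi : ℂ) * Complex.I * (j u) / M =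
          ((2 * Real.pi * (j u) / M : ℝ) : ℂ) * Complex.I := by push_cast; ring
      rw [h1, Complex.exp_ofReal_mul_I_re]
      refine le_trans ?_ (Real.one_sub_sq_div_two_le_cos)
      have h2 : |2 * Real.pi * (j u) / M| ≤ 1 := by
        rw [abs_div, abs_mul, abs_of_pos Real.two_pi_pos, abs_of_pos hM, div_le_one hM]
        have := Real.pi_lt_d2
        have := hj u
        have := abs_nonneg (j u : ℝ)
        nlinarith
      have := (sq_le_one_iff_abs_le_one _).mpr h2
      linarith

lemma abs_sum_mul_le {m : ℕ} (t y : Fin m → ℝ) (H Y : ℝ) (hH : 0 ≤ H) (ht : ∀ i, |t i| ≤ H)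
    (hy : ∀ i, |y i| ≤ Y) : |∑ i, t i * y i| ≤ m * (H * Y) := by
  calc |∑ i, t i * y i| ≤ ∑ i, |t i * y i| := Finset.abs_sum_le_sum_abs _ _
    _ ≤ ∑ _i : Fin m, H * Y := by
      refine Finset.sum_le_sum fun i _ => ?_
      rw [abs_mul]
      exact mul_le_mul (ht i) (hy i) (abs_nonneg _) hH
    _ = _ := by simp

lemma exists_coord_of_small {K : Type*} [Field K] [NumberField K] {Λ : Type*} [AddCommGroup Λ]
    [Module (𝓞 K) Λ] {m : ℕ} (b : Module.Basis (Fin m) ℤ Λ) {κ : Type*} [Fintype κ]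
    (β : Module.Basis κ ℤ (𝓞 K)) (c : ℕ) (hc : ∀ k i j, |b.repr (β k • b j) i| ≤ c)
    (α : 𝓞 K) (A : ℕ) (hα : ∀ k, |β.repr α k| ≤ A) (i j : Fin m) :
    |b.repr (α • b j) i| ≤ Fintype.card κ * (A * c) := by
  conv_lhs => rw [← β.sum_repr α]
  simp only [Finset.sum_smul, smul_assoc, map_sum, map_zsmul, Finsupp.finsetSum_apply,
    Finsupp.smul_apply]
  calc |∑ k, β.repr α k • b.repr (β k • b j) i|
      ≤ ∑ k, |β.repr α k • b.repr (β k • b j) i| := Finset.abs_sum_le_sum_abs _ _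
    _ ≤ ∑ _k : κ, (A * c : ℤ) := by
      refine Finset.sum_le_sum fun k _ => ?_
      rw [smul_eq_mul, abs_mul]
      exact mul_le_mul (hα k) (hc k i j) (abs_nonneg _) (by positivity)
    _ = _ := by simp

/-- Separation: a nonzero integral functional with coefficients at most `D` is not identically zero
modulo `T * D` on `I • Λ`, because its value at a suitable short vector of `I • Λ` is nonzero and
smaller than `T * D`. -/
lemma exists_not_dvd {K : Type*} [Field K] [NumberField K] {Λ : Type*} [AddCommGroup Λ]
    [Module (𝓞 K) Λ] {m : ℕ} (b : Module.Basis (Fin m) ℤ Λ) {κ : Type*} [Fintype κ]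
    (β : Module.Basis κ ℤ (𝓞 K)) (c : ℕ) (hc : ∀ k i j, |b.repr (β k • b j) i| ≤ c)
    (I : Ideal (𝓞 K)) (hI : I ≠ ⊥) (A T D : ℕ)
    (hA : Ideal.absNorm I < (A + 1) ^ Fintype.card κ)
    (hT : m * (Fintype.card κ * (A * c)) < T) (hD : 0 < D)
    (t : Fin m → ℤ) (ht : t ≠ 0) (htD : ∀ i, |t i| ≤ D) :
    ∃ α ∈ I, ∃ j, ¬ ((T * D : ℕ) : ℤ) ∣ ∑ i, t i * b.repr (α • b j) i := by
  obtain ⟨α, hα, hα0, hαA⟩ := exists_small_mem K β I hI A hA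
  obtain ⟨j, hj⟩ := exists_functional_ne_zero b α hα0 t ht
  refine ⟨α, hα, j, fun h => hj (Int.eq_zero_of_abs_lt_dvd h ?_)⟩
  have h3 := abs_sum_mul_le (fun i => (t i : ℝ)) (fun i => (b.repr (α • b j) i : ℝ)) D
    (Fintype.card κ * (A * c)) (by positivity) (fun i => by exact_mod_cast htD i)
    (fun i => by exact_mod_cast exists_coord_of_small b β c hc α A hαA i j)
  have h4 : |∑ i, t i * b.repr (α • b j) i| ≤ m * (D * (Fintype.card κ * (A * c)) : ℤ) := by
    exact_mod_cast h3
  have h5 : m * (D * (Fintype.card κ * (A * c))) < T * D := by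
    calc _ = m * (Fintype.card κ * (A * c)) * D := by ring
      _ < _ := Nat.mul_lt_mul_of_pos_right hT hD
  refine h4.trans_lt ?_
  exact_mod_cast h5

/-! ### The sieve in coordinates -/

/-- The sieve for a set of lattice points with coordinates at most `V`, with an integer `T` that
dominates both `V` and the separation scale. It is `card_mul_le` applied to
`G = (ℤ / T D)^m`, where `D` is a common multiple of all relevant norms, and to the characters
with integer frequencies in `[0, D)^m`; the quotient of `#G` by the number of characters is
`T ^ m`. -/
theorem lattice_sieve {K : Type*} [Field K] [NumberField K] {Λ : Type*} [AddCommGroup Λ]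
    [Module (𝓞 K) Λ] {m : ℕ} (b : Module.Basis (Fin m) ℤ Λ) {κ : Type*} [Fintype κ]
    (β : Module.Basis κ ℤ (𝓞 K)) (c : ℕ) (hc : ∀ k i j, |b.repr (β k • b j) i| ≤ c)
    (Q V : ℝ) (hQ : 1 ≤ Q) (A T : ℕ) (hA : Q ^ 2 < (A + 1) ^ Fintype.card κ)
    (hT1 : 7 * (m * V) ≤ T) (hT2 : 2 * V < T) (hT3 : m * (Fintype.card κ * (A * c)) < T)
    (ω : Ideal (𝓞 K) → ℝ)
    (hω : ∀ 𝔭 : Ideal (𝓞 K), 𝔭.IsPrime → 𝔭 ≠ ⊥ → 0 ≤ ω 𝔭 ∧ ω 𝔭 < 1)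
    (E : Set Λ) (hE : ∀ e ∈ E, ∀ i, |(b.repr e i : ℝ)| ≤ V)
    (hcard : ∀ 𝔭 : Ideal (𝓞 K), 𝔭.IsPrime → 𝔭 ≠ ⊥ → (Ideal.absNorm 𝔭 : ℝ) ≤ Q →
          (Nat.card ((fun a : Λ =>
              (Submodule.Quotient.mk a : Λ ⧸ (𝔭 • ⊤ : Submodule (𝓞 K) Λ))) '' E) : ℝ)
            ≤ (1 - ω 𝔭) * (Nat.card (Λ ⧸ (𝔭 • ⊤ : Submodule (𝓞 K) Λ)) : ℝ)) :
    (Nat.card E : ℝ) * (∑' 𝔞 : {𝔞 : Ideal (𝓞 K) // Squarefree 𝔞 ∧ (Ideal.absNorm 𝔞 : ℝ) ≤ Q},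
              ∏ᶠ (𝔭 : Ideal (𝓞 K)) (_ : 𝔭.IsPrime ∧ 𝔭 ∣ (𝔞 : Ideal (𝓞 K))),
                ω 𝔭 / (1 - ω 𝔭)) ≤ 4 * (T : ℝ) ^ m := by
  classical
  have hfin : {I : Ideal (𝓞 K) | (Ideal.absNorm I : ℝ) ≤ Q}.Finite := by
    refine (Ideal.finite_setOfPred_absNorm_le ⌊Q⌋₊).subset fun I hI => Nat.le_floor hI
  let ι := {𝔭 : Ideal (𝓞 K) // 𝔭.IsPrime ∧ 𝔭 ≠ ⊥ ∧ (Ideal.absNorm 𝔭 : ℝ) ≤ Q}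
  let J := {𝔞 : Ideal (𝓞 K) // Squarefree 𝔞 ∧ (Ideal.absNorm 𝔞 : ℝ) ≤ Q}
  have : Finite ι := hfin.subset fun I hI => hI.2.2
  have : Finite J := hfin.subset fun I hI => hI.2
  let _ : Fintype ι := Fintype.ofFinite ι
  let _ : Fintype J := Fintype.ofFinite J
  let D : ℕ := ∏ p : ι, Ideal.absNorm p.1
  have hD : 0 < D := Finset.prod_pos fun p _ => Nat.pos_of_ne_zero fun h =>
    p.2.2.1 (Ideal.absNorm_eq_zero_iff.mp h)
  have hT : 0 < T := by omega
  let M : ℕ := T * D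
  have hM : 0 < M := Nat.mul_pos hT hD
  have : NeZero M := ⟨hM.ne'⟩
  let π : Λ → (Fin m → ZMod M) := fun v i => (b.repr v i : ZMod M)
  let X : ι → Type _ := fun p => Λ ⧸ (p.1 • ⊤ : Submodule (𝓞 K) Λ)
  have hρ : ∀ p : ι, ∃ ρ : (Fin m → ZMod M) →+ X p, ∀ v, ρ (π v) = Submodule.Quotient.mk v := by
    intro p
    refine exists_lift_hom b M (Submodule.mkQ (p.1 • ⊤ : Submodule (𝓞 K) Λ)).toAddMonoidHom
      fun v => absNorm_smul_quotient p.1 M ?_ v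
    exact (Finset.dvd_prod_of_mem (fun p : ι => Ideal.absNorm p.1) (Finset.mem_univ p)).trans
      (Dvd.intro_left T rfl)
  choose ρ hρ using hρ
  have hXfin : ∀ p, Finite (X p) := fun p => Finite.of_surjective (ρ p) fun x => by
    obtain ⟨v, rfl⟩ := Submodule.Quotient.mk_surjective _ x
    exact ⟨_, hρ p v⟩
  let _ : ∀ p, Fintype (X p) := fun p => Fintype.ofFinite (X p)
  have hmem : ∀ (p : ι) (α : 𝓞 K) (v : Λ), α ∈ p.1 → ρ p (π (α • v)) = 0 := by
    intro p α v hα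
    rw [hρ]
    exact (Submodule.Quotient.mk_eq_zero _).mpr (Submodule.smul_mem_smul hα trivial)
  have hind : ∀ (S : Finset ι) (p : ι), p ∉ S → ∀ x : X p,
      ∃ t, (∀ q ∈ S, ρ q t = 0) ∧ ρ p t = x := by
    intro S p hp x
    obtain ⟨v, rfl⟩ := Submodule.Quotient.mk_surjective _ x
    have hcop : IsCoprime p.1 (∏ q ∈ S, q.1) := by
      refine IsCoprime.prod_right fun q hq => ?_
      have : p.1.IsMaximal := p.2.1.isMaximal p.2.2.1
      have : q.1.IsMaximal := q.2.1.isMaximal q.2.2.1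
      refine Ideal.isCoprime_of_isMaximal ?_
      intro h
      exact hp (Subtype.ext h ▸ hq)
    obtain ⟨γ, hγ, δ, hδ, hsum⟩ := Ideal.isCoprime_iff_exists.mp hcop
    refine ⟨π (δ • v), fun q hq => hmem q δ v ?_, ?_⟩
    · exact Ideal.le_of_dvd (Finset.dvd_prod_of_mem _ hq) hδ
    · rw [hρ]
      refine (Submodule.Quotient.eq _).mpr ?_
      have : δ • v - v = (-γ) • v := by
        rw [eq_sub_of_add_eq' hsum, sub_smul, one_smul, neg_smul]; abel
      rw [this]
      exact Submodule.smul_mem_smul (neg_mem hγ) trivial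
  let S : J → Finset ι := fun a => Finset.univ.filter fun p => p.1 ∣ a.1
  have hdvdQ : ∀ (a : J) (p : Ideal (𝓞 K)), p.IsPrime → p ∣ a.1 →
      p ≠ ⊥ ∧ (Ideal.absNorm p : ℝ) ≤ Q := by
    intro a p hp hpa
    have ha0 : a.1 ≠ 0 := a.2.1.ne_zero
    refine ⟨fun h => ha0 (zero_dvd_iff.mp (by rwa [h] at hpa)), le_trans ?_ a.2.2⟩
    have h1 := Ideal.absNorm_dvd_absNorm_of_le (Ideal.le_of_dvd hpa)
    exact_mod_cast Nat.le_of_dvd (Nat.pos_of_ne_zero fun h => ha0 (Ideal.absNorm_eq_zero_iff.mp h)) h1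
  have hS : Function.Injective S := by
    intro a a' h
    refine Subtype.ext (squarefree_ideal_ext a.2.1 a'.2.1 fun p hp => ?_)
    have key : ∀ a a' : J, S a = S a' → p ∣ a.1 → p ∣ a'.1 := by
      intro a a' h hpa
      have h2 : (⟨p, hp, hdvdQ a p hp hpa⟩ : ι) ∈ S a := by simpa [S] using hpa
      rw [h] at h2
      simpa [S] using h2
    exact ⟨key a a' h, key a' a h.symm⟩
  let χ : (Fin m → Fin D) → AddChar (Fin m → ZMod M) ℂ := fun u =>
    (ZMod.stdAddChar (N := M)).compAddMonoidHom
      (∑ i, ((u i : ℕ) : ℤ) • Pi.evalAddMonoidHom (fun _ : Fin m => ZMod M) i)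
  have hχπ : ∀ u v, χ u (π v) =
      ZMod.stdAddChar (N := M) ((∑ i, ((u i : ℕ) : ℤ) * b.repr v i : ℤ) : ZMod M) := by
    intro u v
    simp [χ, π, AddMonoidHom.finsetSum_apply]
  have hχ : ∀ a a' u u', u ≠ u' → ∃ t, (∀ q ∈ S a ∪ S a', ρ q t = 0) ∧ χ u t ≠ χ u' t := by
    intro a a' u u' huu
    have hne : a.1 * a'.1 ≠ ⊥ := mul_ne_zero a.2.1.ne_zero a'.2.1.ne_zero
    have hnorm : Ideal.absNorm (a.1 * a'.1) < (A + 1) ^ Fintype.card κ := by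
      have h1 : ((Ideal.absNorm (a.1 * a'.1) : ℕ) : ℝ) ≤ Q ^ 2 := by
        rw [map_mul, sq]
        push_cast
        exact mul_le_mul a.2.2 a'.2.2 (by positivity) (by linarith)
      exact_mod_cast h1.trans_lt hA
    let t : Fin m → ℤ := fun i => ((u i : ℕ) : ℤ) - ((u' i : ℕ) : ℤ)
    have ht : t ≠ 0 := by
      intro h
      apply huu
      funext i
      have := congrFun h i
      simp only [t, Pi.zero_apply] at this
      apply Fin.ext
      omega
    have htD : ∀ i, |t i| ≤ D := by
      intro i
      have h1 := (u i).isLt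
      have h2 := (u' i).isLt
      simp only [t]
      rw [abs_le]
      constructor <;> omega
    obtain ⟨α, hα, j, hj⟩ := exists_not_dvd b β c hc _ hne A T D hnorm hT3 hD t ht htD
    have hαa : α ∈ a.1 := Ideal.mul_le_left hα
    have hαa' : α ∈ a'.1 := Ideal.mul_le_right hα
    refine ⟨π (α • b j), fun q hq => hmem q α _ ?_, fun h => hj ?_⟩
    · rcases Finset.mem_union.mp hq with hq | hq
      · have hd : q.1 ∣ a.1 := (Finset.mem_filter.mp hq).2
        exact Ideal.le_of_dvd hd hαa
      · have hd : q.1 ∣ a'.1 := (Finset.mem_filter.mp hq).2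
        exact Ideal.le_of_dvd hd hαa'
    · rw [hχπ, hχπ] at h
      have h := ZMod.injective_stdAddChar h
      rw [← sub_eq_zero, ← Int.cast_sub, ZMod.intCast_zmod_eq_zero_iff_dvd,
        ← Finset.sum_sub_distrib] at h
      simp only [← sub_mul] at h
      exact h
  have hMT : (T : ℝ) ≤ M := by exact_mod_cast Nat.le_mul_of_pos_right T hD
  have hinj : Set.InjOn π E := by
    intro e he e' he' h
    apply b.repr.injective
    ext i
    have h1 : ((b.repr e i : ℤ) : ZMod M) = (b.repr e' i : ℤ) := congrFun h i
    rw [← sub_eq_zero, ← Int.cast_sub, ZMod.intCast_zmod_eq_zero_iff_dvd] at h1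
    rw [← sub_eq_zero]
    refine Int.eq_zero_of_abs_lt_dvd h1 ?_
    have h2 : |(b.repr e i : ℝ) - b.repr e' i| < M := by
      have := abs_sub (b.repr e i : ℝ) (b.repr e' i)
      have := hE e he i
      have := hE e' he' i
      linarith
    exact_mod_cast h2
  have hmain := card_mul_le ρ hind S hS χ hχ (π '' E).toFinset ?_ (fun p => ω p.1)
    (fun p => hω p.1 p.2.1 p.2.2.1) ?_
  · have e1 : ((π '' E).toFinset.card : ℝ) = Nat.card E := by
      rw [← Set.ncard_eq_toFinset_card', hinj.ncard_image, Nat.card_coe_set_eq]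
    have e2 : (∑' 𝔞 : J, ∏ᶠ (𝔭 : Ideal (𝓞 K)) (_ : 𝔭.IsPrime ∧ 𝔭 ∣ (𝔞 : Ideal (𝓞 K))),
        ω 𝔭 / (1 - ω 𝔭)) = ∑ a : J, ∏ p ∈ S a, ω p.1 / (1 - ω p.1) := by
      rw [tsum_fintype]
      refine Finset.sum_congr rfl fun a _ => ?_
      refine (finprod_cond_eq_prod_of_cond_iff (fun 𝔭 => ω 𝔭 / (1 - ω 𝔭))
        (p := fun 𝔭 => 𝔭.IsPrime ∧ 𝔭 ∣ a.1)
        (t := (S a).map (Function.Embedding.subtype _)) ?_).trans ?_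
      · intro p _
        simp only [Finset.mem_map, S, Finset.mem_filter, Finset.mem_univ, true_and]
        constructor
        · rintro ⟨hp, hpa⟩
          exact ⟨⟨p, hp, hdvdQ a p hp hpa⟩, hpa, rfl⟩
        · rintro ⟨q, hq, rfl⟩
          exact ⟨q.2.1, hq⟩
      · rw [Finset.prod_map]
        rfl
    rw [e1, ← e2] at hmain
    have e3 : (Fintype.card (Fin m → ZMod M) : ℝ) = T ^ m * D ^ m := by
      simp [M, ZMod.card, mul_pow]
    have e4 : (Fintype.card (Fin m → Fin D) : ℝ) = D ^ m := by simp
    rw [e3, e4] at hmain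
    have hDm : (0 : ℝ) < (D : ℝ) ^ m := by positivity
    refine le_of_mul_le_mul_right ?_ hDm
    linarith
  · intro v hv
    obtain ⟨e, he, rfl⟩ := Set.mem_toFinset.mp hv
    simp only [hχπ]
    refine half_card_le_norm_sum M _ fun u => ?_
    have h3 := abs_sum_mul_le (fun i => ((u i : ℕ) : ℝ)) (fun i => (b.repr e i : ℝ)) D V
      (by positivity) (fun i => ?_) (hE e he)
    · push_cast
      calc 7 * |∑ i, ((u i : ℕ) : ℝ) * (b.repr e i : ℝ)| ≤ 7 * (m * (D * V)) := by gcongr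
        _ = 7 * (m * V) * D := by ring
        _ ≤ T * D := by gcongr
        _ = _ := by simp [M]
    · rw [abs_of_nonneg (by positivity)]
      exact_mod_cast (u i).isLt.le
  · intro p
    have h := hcard p.1 p.2.1 p.2.2.1 p.2.2.2
    have e1 : (((π '' E).toFinset.image (ρ p)).card : ℝ) = Nat.card ((fun a : Λ =>
        (Submodule.Quotient.mk a : Λ ⧸ (p.1 • ⊤ : Submodule (𝓞 K) Λ))) '' E) := by
      rw [Nat.card_coe_set_eq, ← Set.ncard_coe_finset]
      congr 2
      ext x
      simp [hρ]
    rw [e1, ← Nat.card_eq_fintype_card]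
    exact h

/-- Serre's large sieve for torsion-free `O_K`-modules: if `Λ` is a finitely generated
torsion-free `O_K`-module of rank `r + 1` and `‖·‖` is a norm on `Λ_ℝ = ℝ ⊗ Λ`, then there is
`C > 0` depending only on `K`, `Λ` and the norm such that for all `x, Q ≥ 1`, all families
`(ω_𝔭) ⊆ [0,1)` indexed by the nonzero primes of `O_K`, and every `E ⊆ Λ` contained in the
ball of radius `x` and satisfying `#π_𝔭(E) ≤ (1 - ω_𝔭)·#(Λ/𝔭Λ)` for every nonzero prime `𝔭`
of norm at most `Q`, one has `#E ≤ C · max(x^{(r+1)d}, Q^{2(r+1)}) / L(Q)`, where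
`L(Q) = Σ_𝔞 ∏_{𝔭 ∣ 𝔞} ω_𝔭/(1 - ω_𝔭)` over squarefree ideals `𝔞` of norm at most `Q`. -/
theorem stmt_9 (K : Type) [Field K] [NumberField K] (r : ℕ)
    (Λ : Type) [AddCommGroup Λ] [Module (𝓞 K) Λ] [Module.Finite (𝓞 K) Λ]
    [NoZeroSMulDivisors (𝓞 K) Λ]
    (hrank : Module.finrank K (K ⊗[𝓞 K] Λ) = r + 1)
    (nrm : Seminorm ℝ (ℝ ⊗[ℤ] Λ))
    (hnrm : ∀ v : ℝ ⊗[ℤ] Λ, nrm v = 0 → v = 0) :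
    ∃ C > (0 : ℝ), ∀ x : ℝ, 1 ≤ x → ∀ Q : ℝ, 1 ≤ Q →
      ∀ ω : Ideal (𝓞 K) → ℝ,
        (∀ 𝔭 : Ideal (𝓞 K), 𝔭.IsPrime → 𝔭 ≠ ⊥ → 0 ≤ ω 𝔭 ∧ ω 𝔭 < 1) →
      ∀ E : Set Λ,
        (∀ e ∈ E, nrm ((1 : ℝ) ⊗ₜ[ℤ] e) ≤ x) →
        (∀ 𝔭 : Ideal (𝓞 K), 𝔭.IsPrime → 𝔭 ≠ ⊥ → (Ideal.absNorm 𝔭 : ℝ) ≤ Q →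
          (Nat.card ((fun a : Λ =>
              (Submodule.Quotient.mk a : Λ ⧸ (𝔭 • ⊤ : Submodule (𝓞 K) Λ))) '' E) : ℝ)
            ≤ (1 - ω 𝔭) * (Nat.card (Λ ⧸ (𝔭 • ⊤ : Submodule (𝓞 K) Λ)) : ℝ)) →
        (Nat.card E : ℝ)
          ≤ C * max (x ^ ((r + 1) * Module.finrank ℚ K)) (Q ^ (2 * (r + 1))) /
            (∑' 𝔞 : {𝔞 : Ideal (𝓞 K) // Squarefree 𝔞 ∧ (Ideal.absNorm 𝔞 : ℝ) ≤ Q},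
              ∏ᶠ (𝔭 : Ideal (𝓞 K)) (_ : 𝔭.IsPrime ∧ 𝔭 ∣ (𝔞 : Ideal (𝓞 K))),
                ω 𝔭 / (1 - ω 𝔭)) := by
  classical
  have hfin : Module.Finite ℤ Λ := Module.Finite.trans (𝓞 K) Λ
  have htf : Module.IsTorsionFree ℤ Λ := by
    refine Module.IsTorsionFree.trans (𝓞 K)
  have hfree : Module.Free ℤ Λ := Module.free_of_finite_type_torsion_free'
  let m := Module.finrank ℤ Λ
  let b : Module.Basis (Fin m) ℤ Λ := Module.finBasis ℤ Λ
  let β := RingOfIntegers.basis K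
  have hcardβ : Fintype.card (Module.Free.ChooseBasisIndex ℤ (𝓞 K)) = Module.finrank ℚ K := by
    rw [← Module.finrank_eq_card_chooseBasisIndex, RingOfIntegers.rank]
  set d := Module.finrank ℚ K with hd
  have hd0 : 0 < d := Module.finrank_pos
  have hm : m ≤ (r + 1) * d := hrank ▸ finrank_int_le K Λ b
  obtain ⟨κ, hκ0, hκ⟩ := exists_repr_le b nrm hnrm
  obtain ⟨c, hc⟩ : ∃ c : ℕ, ∀ k i j, |b.repr (β k • b j) i| ≤ c := by
    refine ⟨∑ k, ∑ i, ∑ j, (b.repr (β k • b j) i).natAbs, fun k i j => ?_⟩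
    rw [Int.abs_eq_natAbs, Nat.cast_le]
    refine le_trans ?_ (Finset.single_le_sum (fun _ _ => Nat.zero_le _) (Finset.mem_univ k))
    refine le_trans ?_ (Finset.single_le_sum (fun _ _ => Nat.zero_le _) (Finset.mem_univ i))
    exact Finset.single_le_sum (f := fun j => (b.repr (β k • b j) i).natAbs)
      (fun _ _ => Nat.zero_le _) (Finset.mem_univ j)
  -- The three terms serve, in order, the bias of the characters on `E`, their separation, and
  -- the injectivity of reduction on `E`.
  set C₁ : ℝ := 7 * m * κ + m * (d * c) + 2 * κ + 1 with hC₁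
  have hC₁0 : 1 ≤ C₁ := by
    have : 0 ≤ 7 * m * κ + m * (d * c) + 2 * κ := by positivity
    linarith
  refine ⟨4 * (C₁ + 1) ^ ((r + 1) * d), by positivity, ?_⟩
  intro x hx Q hQ ω hω E hE hcard
  -- `Q ^ 2` bounds the norm of a product of two moduli, and `q` is its `d`-th root.
  set q : ℝ := Q ^ ((2 : ℝ) / d) with hq
  have hqd : q ^ d = Q ^ 2 := by
    rw [hq, ← Real.rpow_natCast, ← Real.rpow_mul (by linarith)]
    have : (2 : ℝ) / d * d = (2 : ℕ) := by
      push_cast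
      field_simp
    rw [this, Real.rpow_natCast]
  have hq1 : 1 ≤ q := Real.one_le_rpow hQ (by positivity)
  set R := max x q with hR
  have hR1 : 1 ≤ R := le_max_of_le_left hx
  have hxR : x ≤ R := le_max_left _ _
  have hqR : q ≤ R := le_max_right _ _
  set A := ⌊q⌋₊ with hAdef
  have hAq : (A : ℝ) ≤ q := Nat.floor_le (by linarith)
  set T := ⌊C₁ * R⌋₊ + 1 with hT
  have hTgt : C₁ * R < T := by
    rw [hT]; push_cast; exact Nat.lt_floor_add_one _
  have hTle : (T : ℝ) ≤ (C₁ + 1) * R := by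
    have : (⌊C₁ * R⌋₊ : ℝ) ≤ C₁ * R := Nat.floor_le (by positivity)
    rw [hT]; push_cast; linarith
  have hexp : C₁ * R = 7 * (m * (κ * R)) + m * (d * (R * c)) + 2 * (κ * R) + R := by
    rw [hC₁]; ring
  have n1 : 0 ≤ 7 * (m * (κ * R)) := by positivity
  have n2 : 0 ≤ m * (d * (R * c)) := by positivity
  have n3 : 0 ≤ 2 * (κ * R) := by positivity
  have hmain := lattice_sieve b β c hc Q (κ * R) hQ A T
    (by
      rw [hcardβ, ← hqd]
      exact pow_lt_pow_left₀ (Nat.lt_floor_add_one q) (by linarith) hd0.ne')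
    (by linarith) (by linarith)
    (by
      rw [hcardβ]
      have h1 : (m : ℝ) * (d * (A * c)) ≤ m * (d * (R * c)) := by
        have := hAq.trans hqR
        gcongr
      have h2 : (m : ℝ) * (d * (A * c)) < T := by linarith
      exact_mod_cast h2)
    ω hω E
    (fun e he i => (hκ e i).trans (by have := (hE e he).trans hxR; gcongr)) hcard
  have hfinQ : {I : Ideal (𝓞 K) | (Ideal.absNorm I : ℝ) ≤ Q}.Finite := by
    refine (Ideal.finite_setOfPred_absNorm_le ⌊Q⌋₊).subset fun I hI => Nat.le_floor hI
  have : Finite {𝔞 : Ideal (𝓞 K) // Squarefree 𝔞 ∧ (Ideal.absNorm 𝔞 : ℝ) ≤ Q} :=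
    hfinQ.subset fun I hI => hI.2
  have hnn : ∀ 𝔞 : {𝔞 : Ideal (𝓞 K) // Squarefree 𝔞 ∧ (Ideal.absNorm 𝔞 : ℝ) ≤ Q},
      0 ≤ ∏ᶠ (𝔭 : Ideal (𝓞 K)) (_ : 𝔭.IsPrime ∧ 𝔭 ∣ (𝔞 : Ideal (𝓞 K))), ω 𝔭 / (1 - ω 𝔭) := by
    intro 𝔞
    refine finprod_nonneg fun 𝔭 => finprod_nonneg fun h => ?_
    have h0 : 𝔭 ≠ ⊥ := fun hb =>
      𝔞.2.1.ne_zero (zero_dvd_iff.mp (by have := h.2; rwa [hb] at this))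
    have := hω 𝔭 h.1 h0
    exact div_nonneg this.1 (by linarith)
  have hLpos : 0 < ∑' 𝔞 : {𝔞 : Ideal (𝓞 K) // Squarefree 𝔞 ∧ (Ideal.absNorm 𝔞 : ℝ) ≤ Q},
      ∏ᶠ (𝔭 : Ideal (𝓞 K)) (_ : 𝔭.IsPrime ∧ 𝔭 ∣ (𝔞 : Ideal (𝓞 K))), ω 𝔭 / (1 - ω 𝔭) := by
    -- the unit ideal contributes an empty product
    refine (Summable.of_finite).tsum_pos hnn ⟨1, squarefree_one, by simpa using hQ⟩ ?_
    have : ∀ 𝔭 : Ideal (𝓞 K), ¬ (𝔭.IsPrime ∧ 𝔭 ∣ 1) := fun 𝔭 h =>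
      h.1.ne_top (Ideal.isUnit_iff.mp (isUnit_of_dvd_one h.2))
    refine lt_of_lt_of_eq one_pos (finprod_eq_one_of_forall_eq_one fun 𝔭 => ?_).symm
    have hempty : IsEmpty (𝔭.IsPrime ∧ 𝔭 ∣ (1 : Ideal (𝓞 K))) := ⟨this 𝔭⟩
    exact @finprod_of_isEmpty _ _ _ hempty _
  rw [le_div_iff₀ hLpos]
  refine hmain.trans ?_
  have hRpow : R ^ ((r + 1) * d) = max (x ^ ((r + 1) * d)) (Q ^ (2 * (r + 1))) := by
    rw [hR, (pow_left_monotoneOn (n := (r + 1) * d)).map_max (show (0:ℝ) ≤ x by linarith)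
      (show 0 ≤ q by linarith)]
    congr 1
    rw [mul_comm (r + 1) d, pow_mul, hqd, ← pow_mul]
  rw [← hRpow]
  calc 4 * (T : ℝ) ^ m ≤ 4 * ((C₁ + 1) * R) ^ m := by gcongr
    _ ≤ 4 * ((C₁ + 1) * R) ^ ((r + 1) * d) := by
      gcongr
      nlinarith
    _ = _ := by rw [mul_pow]; ring
end
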